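/- arXiv:1112.6129 — 2 statements merged into one kernel-verified Lean document; each statement's English description precedes it below -/
import Mathlib

section
/- The formula (∃x,y)(x = y → □⊥) is provable in CC. -/
/-!
Deep embedding of Weaver's system CC ("Constructive Concepts").

The language is the first-order language of set theory (∈ and =, variables
only as terms) augmented by a unary operator □.  Formulas use de Bruijn
indices for variables.  ⊥ is the defined formula (∀x,y)(x ∈ y) and ¬A
abbreviates A → ⊥.

CC consists of intuitionistic predicate calculus with equality (presented
in natural-deduction style, with contexts), the modal axiom schemes
(1) A → □A, (2) □(A∧B) ↔ (□A ∧ □B), (3) □(A∨B) ↔ (□A ∨ □B),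
(4) □∃xA ↔ ∃x□A, (5) □∀xA ↔ ∀x□A, (6) □(A→B) → (□A → □B),
the deduction rule inferring A from □A (applicable to theorems, i.e. in
the empty context), the extensionality axiom (7), and the comprehension
scheme (8) (∃x)(∀r)(r ∈ x ↔ □A) with x not free in A.
-/

namespace CC

/-- Formulas of CC; variables are de Bruijn indices. -/
inductive Fm : Type
  | mem : ℕ → ℕ → Fm        -- x ∈ y
  | eq  : ℕ → ℕ → Fm        -- x = y
  | and : Fm → Fm → Fm
  | or  : Fm → Fm → Fm
  | imp : Fm → Fm → Fm
  | all : Fm → Fm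
  | ex  : Fm → Fm
  | box : Fm → Fm
  deriving DecidableEq

namespace Fm

/-- ⊥ stands for (∀x,y)(x ∈ y). -/
def bot : Fm := .all (.all (.mem 1 0))

/-- ¬A abbreviates A → ⊥. -/
def neg (A : Fm) : Fm := A.imp bot

/-- A ↔ B abbreviates (A → B) ∧ (B → A). -/
def iff (A B : Fm) : Fm := (A.imp B).and (B.imp A)

/-- Lift a variable: indices ≥ d are incremented. -/
def liftVar (d n : ℕ) : ℕ := if n < d then n else n + 1

/-- Lift a formula at depth d: free indices ≥ d are incremented. -/
def liftAt (d : ℕ) : Fm → Fm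
  | mem a b => mem (liftVar d a) (liftVar d b)
  | eq a b  => eq (liftVar d a) (liftVar d b)
  | and A B => and (A.liftAt d) (B.liftAt d)
  | or A B  => or (A.liftAt d) (B.liftAt d)
  | imp A B => imp (A.liftAt d) (B.liftAt d)
  | all A   => all (A.liftAt (d+1))
  | ex A    => ex (A.liftAt (d+1))
  | box A   => box (A.liftAt d)

/-- Lift a formula (all free indices incremented). -/
def shift : Fm → Fm := liftAt 0

/-- Substitute variable t for index d (indices above d are lowered). -/
def substVar (d t n : ℕ) : ℕ := if n < d then n else if n = d then t else n - 1

/-- Substitute the variable t for the de Bruijn index d. -/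
def subst (d t : ℕ) : Fm → Fm
  | mem a b => mem (substVar d t a) (substVar d t b)
  | eq a b  => eq (substVar d t a) (substVar d t b)
  | and A B => and (A.subst d t) (B.subst d t)
  | or A B  => or (A.subst d t) (B.subst d t)
  | imp A B => imp (A.subst d t) (B.subst d t)
  | all A   => all (A.subst (d+1) (t+1))
  | ex A    => ex (A.subst (d+1) (t+1))
  | box A   => box (A.subst d t)

end Fm

/-- The extensionality axiom (7): x = y ↔ (∀u)(u ∈ x ↔ u ∈ y)
(universally closed). -/
def extAx : Fm :=
  .all (.all (Fm.iff (.eq 1 0) (.all (Fm.iff (.mem 0 2) (.mem 0 1)))))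

/-- Derivability in CC, from a list of hypotheses.  The rules are those of
intuitionistic natural deduction with equality (with ex falso for the
defined ⊥), the modal axioms (1)–(6), the rule inferring A from □A (for
theorems, i.e. with no hypotheses), extensionality, and comprehension.
In `compr`, the formula `A` has de Bruijn index 0 as the fixed variable r;
lifting at 1 guarantees that the comprehension variable x does not occur
freely in A. -/
inductive Prf : List Fm → Fm → Prop
  | hyp {Γ : List Fm} {A : Fm} : A ∈ Γ → Prf Γ A
  | andI {Γ : List Fm} {A B : Fm} : Prf Γ A → Prf Γ B → Prf Γ (.and A B)
  | andE1 {Γ : List Fm} {A B : Fm} : Prf Γ (.and A B) → Prf Γ A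
  | andE2 {Γ : List Fm} {A B : Fm} : Prf Γ (.and A B) → Prf Γ B
  | orI1 {Γ : List Fm} {A B : Fm} : Prf Γ A → Prf Γ (.or A B)
  | orI2 {Γ : List Fm} {A B : Fm} : Prf Γ B → Prf Γ (.or A B)
  | orE {Γ : List Fm} {A B C : Fm} : Prf Γ (.or A B) → Prf (A :: Γ) C → Prf (B :: Γ) C → Prf Γ C
  | impI {Γ : List Fm} {A B : Fm} : Prf (A :: Γ) B → Prf Γ (.imp A B)
  | impE {Γ : List Fm} {A B : Fm} : Prf Γ (.imp A B) → Prf Γ A → Prf Γ B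
  | exfalso {Γ : List Fm} {A : Fm} : Prf Γ Fm.bot → Prf Γ A
  | allI {Γ : List Fm} {A : Fm} : Prf (Γ.map Fm.shift) A → Prf Γ (.all A)
  | allE {Γ : List Fm} {A : Fm} (t : ℕ) : Prf Γ (.all A) → Prf Γ (A.subst 0 t)
  | exI {Γ : List Fm} {A : Fm} (t : ℕ) : Prf Γ (A.subst 0 t) → Prf Γ (.ex A)
  | exE {Γ : List Fm} {A B : Fm} : Prf Γ (.ex A) → Prf (A :: Γ.map Fm.shift) B.shift → Prf Γ B
  | refl {Γ : List Fm} (t : ℕ) : Prf Γ (.eq t t)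
  | eqSubst {Γ : List Fm} {A : Fm} (s t : ℕ) :
      Prf Γ (.eq s t) → Prf Γ (A.subst 0 s) → Prf Γ (A.subst 0 t)
  | ax1 {Γ : List Fm} {A : Fm} : Prf Γ (A.imp (.box A))
  | ax2 {Γ : List Fm} {A B : Fm} : Prf Γ (Fm.iff (.box (.and A B)) (.and (.box A) (.box B)))
  | ax3 {Γ : List Fm} {A B : Fm} : Prf Γ (Fm.iff (.box (.or A B)) (.or (.box A) (.box B)))
  | ax4 {Γ : List Fm} {A : Fm} : Prf Γ (Fm.iff (.box (.ex A)) (.ex (.box A)))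
  | ax5 {Γ : List Fm} {A : Fm} : Prf Γ (Fm.iff (.box (.all A)) (.all (.box A)))
  | ax6 {Γ : List Fm} {A B : Fm} : Prf Γ ((Fm.box (A.imp B)).imp ((Fm.box A).imp (.box B)))
  | boxE {A : Fm} : Prf [] (.box A) → Prf [] A
  | ext {Γ : List Fm} : Prf Γ extAx
  | compr {Γ : List Fm} (A : Fm) :
      Prf Γ (.ex (.all (Fm.iff (.mem 0 1) (.box (A.liftAt 1)))))

namespace Fm

/-- The formula (∀r)(r ∈ x ↔ □A), saying that `x` is the set {r | □A} which comprehension (8)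
provides.  The variable r is index 0 of `A`, so `x` appears as `x + 1` under the quantifier. -/
def isSetOf (x : ℕ) (A : Fm) : Fm := .all (.iff (.mem 0 (x + 1)) (.box A))

theorem substVar_liftVar_succ (d n : ℕ) : substVar d d (liftVar (d + 1) n) = n := by
  grind [substVar, liftVar]

theorem subst_liftAt_succ (d : ℕ) (A : Fm) : (A.liftAt (d + 1)).subst d d = A := by
  induction A generalizing d <;> simp_all only [liftAt, subst, substVar_liftVar_succ]

theorem subst_iff_mem_box (x t : ℕ) (A : Fm) :
    (Fm.iff (.mem 0 (x + 1)) (.box A)).subst 0 t = .iff (.mem t x) (.box (A.subst 0 t)) := by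
  simp [iff, subst, substVar]

end Fm

namespace Prf

variable {Γ : List Fm} {A B : Fm} {t x y : ℕ}

theorem box_intro (hA : Prf Γ A) : Prf Γ (.box A) :=
  .impE .ax1 hA

theorem mem_of_mem_of_eq (hmem : Prf Γ (.mem t x)) (heq : Prf Γ (.eq x y)) :
    Prf Γ (.mem t y) := by
  simpa [Fm.subst, Fm.substVar] using
    eqSubst (A := .mem (t + 1) 0) x y heq (by simpa [Fm.subst, Fm.substVar] using hmem)

theorem ex_map (hex : Prf Γ (.ex A)) (h : Prf (A :: Γ.map Fm.shift) B) : Prf Γ (.ex B) := by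
  -- Below the shift, the witness is variable 0, and instantiating the shifted `B` there gives `B`.
  refine .exE hex (.exI 0 ?_)
  rwa [Fm.subst_liftAt_succ]

theorem ex_of_isSetOf (A : Fm) (h : Prf (Fm.isSetOf 0 (A.liftAt 1) :: Γ.map Fm.shift) B) :
    Prf Γ (.ex B) :=
  ex_map (.compr A) h

theorem mem_iff_box_of_isSetOf (t : ℕ) (hx : Prf Γ (Fm.isSetOf x A)) :
    Prf Γ (Fm.iff (.mem t x) (.box (A.subst 0 t))) := by
  rw [← Fm.subst_iff_mem_box]
  exact .allE t hx

theorem box_subst_of_isSetOf_of_eq (hx : Prf Γ (Fm.isSetOf x A)) (hy : Prf Γ (Fm.isSetOf y B))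
    (heq : Prf Γ (.eq x y)) (hA : Prf Γ (.box (A.subst 0 t))) : Prf Γ (.box (B.subst 0 t)) :=
  have mem_x : Prf Γ (.mem t x) := .impE (.andE2 (mem_iff_box_of_isSetOf t hx)) hA
  have mem_y : Prf Γ (.mem t y) := mem_of_mem_of_eq mem_x heq
  .impE (.andE1 (mem_iff_box_of_isSetOf t hy)) mem_y

end Prf

/-- The formula (∃x,y)(x = y → □⊥) is provable in CC
(here ⊥ stands for (∀x,y)(x ∈ y)). -/
theorem exists_pair_eq_imp_box_bot :
    Prf [] (.ex (.ex ((Fm.eq 1 0).imp (.box Fm.bot)))) := by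
  -- The pair is x = {r | □(r = r)}, to which everything belongs, and y = {r | □⊥}.
  refine .ex_of_isSetOf (.eq 0 0) (.ex_of_isSetOf .bot (.impI ?_))
  let Γ : List Fm := [.eq 1 0, .isSetOf 0 .bot, .isSetOf 1 (.eq 0 0)]
  change Prf Γ (.box .bot)
  have isSetOf_x : Prf Γ (.isSetOf 1 (.eq 0 0)) := .hyp (by simp [Γ])
  have isSetOf_y : Prf Γ (.isSetOf 0 .bot) := .hyp (by simp [Γ])
  have x_eq_y : Prf Γ (.eq 1 0) := .hyp (by simp [Γ])
  have box_refl : Prf Γ (.box (.eq 0 0)) := .box_intro (.refl 0)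
  exact .box_subst_of_isSetOf_of_eq (t := 0) isSetOf_x isSetOf_y x_eq_y box_refl

end CC
end

section
/- The boxed induction formula (∀z)[(0 ∈ z ∧ (∀x)(x ∈ z → Sx ∈ z)) → (∀y)(y ∈ ω → □(y ∈ z))] is provable in CC″. -/
/-!
Deep embedding of CC″: Weaver's system CC ("Constructive Concepts")
extended by definitions with a constant 0, a unary function symbol S and a
constant ω, satisfying
  r ∈ 0 ↔ □⊥,
  r ∈ Sx ↔ □(r = x),
  r ∈ ω ↔ □(∀z)[(0 ∈ z ∧ (∀x)(x ∈ z → Sx ∈ z)) → r ∈ z].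

The language is the first-order language of set theory (∈ and =) with the
extra function symbols, augmented by a unary operator □.  Variables are de
Bruijn indices.  ⊥ is the defined formula (∀x,y)(x ∈ y) and ¬A abbreviates
A → ⊥.  CC consists of intuitionistic predicate calculus with equality,
the modal axiom schemes (1)–(6), the deduction rule inferring A from □A
(for theorems), extensionality, and the comprehension scheme
(∃x)(∀r)(r ∈ x ↔ □A) with x not free in A.
-/

namespace CC2

/-- Terms of CC″: variables (de Bruijn indices), 0, S, ω. -/
inductive Tm : Type
  | var : ℕ → Tm
  | zero : Tm
  | succ : Tm → Tm
  | omega : Tm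
  deriving DecidableEq

/-- Formulas of CC″. -/
inductive Fm : Type
  | mem : Tm → Tm → Fm      -- s ∈ t
  | eq  : Tm → Tm → Fm      -- s = t
  | and : Fm → Fm → Fm
  | or  : Fm → Fm → Fm
  | imp : Fm → Fm → Fm
  | all : Fm → Fm
  | ex  : Fm → Fm
  | box : Fm → Fm
  deriving DecidableEq

namespace Tm

/-- Lift a term at depth d: free indices ≥ d are incremented. -/
def liftAt (d : ℕ) : Tm → Tm
  | var n => var (if n < d then n else n + 1)
  | zero => zero
  | succ t => succ (t.liftAt d)
  | omega => omega

/-- Substitute the term s for the de Bruijn index d. -/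
def subst (d : ℕ) (s : Tm) : Tm → Tm
  | var n => if n < d then var n else if n = d then s else var (n - 1)
  | zero => zero
  | succ t => succ (subst d s t)
  | omega => omega

end Tm

namespace Fm

/-- ⊥ stands for (∀x,y)(x ∈ y). -/
def bot : Fm := .all (.all (.mem (.var 1) (.var 0)))

/-- ¬A abbreviates A → ⊥. -/
def neg (A : Fm) : Fm := A.imp bot

/-- A ↔ B abbreviates (A → B) ∧ (B → A). -/
def iff (A B : Fm) : Fm := (A.imp B).and (B.imp A)

/-- Lift a formula at depth d: free indices ≥ d are incremented. -/
def liftAt (d : ℕ) : Fm → Fm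
  | mem a b => mem (a.liftAt d) (b.liftAt d)
  | eq a b  => eq (a.liftAt d) (b.liftAt d)
  | and A B => and (A.liftAt d) (B.liftAt d)
  | or A B  => or (A.liftAt d) (B.liftAt d)
  | imp A B => imp (A.liftAt d) (B.liftAt d)
  | all A   => all (A.liftAt (d+1))
  | ex A    => ex (A.liftAt (d+1))
  | box A   => box (A.liftAt d)

/-- Lift a formula (all free indices incremented). -/
def shift : Fm → Fm := liftAt 0

/-- Substitute the term s for the de Bruijn index d. -/
def subst (d : ℕ) (s : Tm) : Fm → Fm
  | mem a b => mem (Tm.subst d s a) (Tm.subst d s b)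
  | eq a b  => eq (Tm.subst d s a) (Tm.subst d s b)
  | and A B => and (A.subst d s) (B.subst d s)
  | or A B  => or (A.subst d s) (B.subst d s)
  | imp A B => imp (A.subst d s) (B.subst d s)
  | all A   => all (A.subst (d+1) (s.liftAt 0))
  | ex A    => ex (A.subst (d+1) (s.liftAt 0))
  | box A   => box (A.subst d s)

end Fm

/-- The extensionality axiom (7): x = y ↔ (∀u)(u ∈ x ↔ u ∈ y)
(universally closed). -/
def extAx : Fm :=
  .all (.all (Fm.iff (.eq (.var 1) (.var 0))
    (.all (Fm.iff (.mem (.var 0) (.var 2)) (.mem (.var 0) (.var 1))))))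

/-- Defining axiom of 0:  (∀r)(r ∈ 0 ↔ □⊥). -/
def zeroAx : Fm := .all (Fm.iff (.mem (.var 0) .zero) (.box Fm.bot))

/-- Defining axiom of S:  (∀r,x)(r ∈ Sx ↔ □(r = x)). -/
def succAx : Fm :=
  .all (.all (Fm.iff (.mem (.var 1) (.succ (.var 0)))
    (.box (.eq (.var 1) (.var 0)))))

/-- Defining axiom of ω:
(∀r)(r ∈ ω ↔ □(∀z)[(0 ∈ z ∧ (∀x)(x ∈ z → Sx ∈ z)) → r ∈ z]). -/
def omegaAx : Fm :=
  .all (Fm.iff (.mem (.var 0) .omega)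
    (.box (.all (.imp
      (.and (.mem .zero (.var 0))
        (.all (.imp (.mem (.var 0) (.var 1))
          (.mem (.succ (.var 0)) (.var 1)))))
      (.mem (.var 1) (.var 0))))))

/-- Derivability in CC″ from a list of hypotheses: intuitionistic natural
deduction with equality (with ex falso for the defined ⊥), the modal axioms
(1)–(6), the rule inferring A from □A (for theorems), extensionality, the
comprehension scheme, and the defining axioms of 0, S, ω.  In `compr` the
formula A has de Bruijn index 0 as the fixed variable r; lifting at 1
guarantees that the comprehension variable x does not occur freely in A. -/
inductive Prf : List Fm → Fm → Prop
  | hyp {Γ : List Fm} {A : Fm} : A ∈ Γ → Prf Γ A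
  | andI {Γ : List Fm} {A B : Fm} : Prf Γ A → Prf Γ B → Prf Γ (.and A B)
  | andE1 {Γ : List Fm} {A B : Fm} : Prf Γ (.and A B) → Prf Γ A
  | andE2 {Γ : List Fm} {A B : Fm} : Prf Γ (.and A B) → Prf Γ B
  | orI1 {Γ : List Fm} {A B : Fm} : Prf Γ A → Prf Γ (.or A B)
  | orI2 {Γ : List Fm} {A B : Fm} : Prf Γ B → Prf Γ (.or A B)
  | orE {Γ : List Fm} {A B C : Fm} :
      Prf Γ (.or A B) → Prf (A :: Γ) C → Prf (B :: Γ) C → Prf Γ C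
  | impI {Γ : List Fm} {A B : Fm} : Prf (A :: Γ) B → Prf Γ (.imp A B)
  | impE {Γ : List Fm} {A B : Fm} : Prf Γ (.imp A B) → Prf Γ A → Prf Γ B
  | exfalso {Γ : List Fm} {A : Fm} : Prf Γ Fm.bot → Prf Γ A
  | allI {Γ : List Fm} {A : Fm} : Prf (Γ.map Fm.shift) A → Prf Γ (.all A)
  | allE {Γ : List Fm} {A : Fm} (t : Tm) : Prf Γ (.all A) → Prf Γ (A.subst 0 t)
  | exI {Γ : List Fm} {A : Fm} (t : Tm) : Prf Γ (A.subst 0 t) → Prf Γ (.ex A)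
  | exE {Γ : List Fm} {A B : Fm} :
      Prf Γ (.ex A) → Prf (A :: Γ.map Fm.shift) B.shift → Prf Γ B
  | refl {Γ : List Fm} (t : Tm) : Prf Γ (.eq t t)
  | eqSubst {Γ : List Fm} {A : Fm} (s t : Tm) :
      Prf Γ (.eq s t) → Prf Γ (A.subst 0 s) → Prf Γ (A.subst 0 t)
  | ax1 {Γ : List Fm} {A : Fm} : Prf Γ (A.imp (.box A))
  | ax2 {Γ : List Fm} {A B : Fm} :
      Prf Γ (Fm.iff (.box (.and A B)) (.and (.box A) (.box B)))
  | ax3 {Γ : List Fm} {A B : Fm} :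
      Prf Γ (Fm.iff (.box (.or A B)) (.or (.box A) (.box B)))
  | ax4 {Γ : List Fm} {A : Fm} : Prf Γ (Fm.iff (.box (.ex A)) (.ex (.box A)))
  | ax5 {Γ : List Fm} {A : Fm} : Prf Γ (Fm.iff (.box (.all A)) (.all (.box A)))
  | ax6 {Γ : List Fm} {A B : Fm} :
      Prf Γ ((Fm.box (A.imp B)).imp ((Fm.box A).imp (.box B)))
  | boxE {A : Fm} : Prf [] (.box A) → Prf [] A
  | ext {Γ : List Fm} : Prf Γ extAx
  | compr {Γ : List Fm} (A : Fm) :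
      Prf Γ (.ex (.all (Fm.iff (.mem (.var 0) (.var 1)) (.box (A.liftAt 1)))))
  | ax0 {Γ : List Fm} : Prf Γ zeroAx
  | axS {Γ : List Fm} : Prf Γ succAx
  | axW {Γ : List Fm} : Prf Γ omegaAx

end CC2

namespace CC2

theorem Tm.subst_liftAt (d : ℕ) (s t : Tm) : Tm.subst d s (t.liftAt d) = t := by
  induction t with
  | var n => grind [Tm.liftAt, Tm.subst]
  | zero => rfl
  | succ t ih => exact congrArg Tm.succ ih
  | omega => rfl

/-- The formula `0 ∈ z ∧ (∀x)(x ∈ z → Sx ∈ z)`, saying that `z` contains 0 and is closed under S;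
`z` is lifted under the quantifier, so that the bound `x` does not capture a variable of `z`. -/
def Fm.isInductive (z : Tm) : Fm :=
  .and (.mem .zero z)
    (.all (.imp (.mem (.var 0) (z.liftAt 0)) (.mem (.succ (.var 0)) (z.liftAt 0))))

namespace Prf

variable {Γ : List Fm} {A B : Fm} {r z : Tm}

theorem box_intro (h : Prf Γ A) : Prf Γ (.box A) :=
  .impE .ax1 h

theorem box_impE (h_imp : Prf Γ (.box (A.imp B))) (h : Prf Γ (.box A)) : Prf Γ (.box B) :=
  .impE (.impE .ax6 h_imp) h

theorem box_allE (t : Tm) (h : Prf Γ (.box (.all A))) : Prf Γ (.box (A.subst 0 t)) :=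
  .allE t (.impE (.andE1 .ax5) h)

theorem box_isInductive_imp_mem_of_mem_omega (z : Tm) (hr : Prf Γ (.mem r .omega)) :
    Prf Γ (.box (.imp (.isInductive z) (.mem r z))) := by
  have box_all : Prf Γ (.box (.all (.imp (.isInductive (.var 0)) (.mem (r.liftAt 0) (.var 0))))) :=
    .impE (.andE1 (.allE r .axW)) hr
  have box_imp : Prf Γ (.box (.imp (.isInductive z) (.mem (Tm.subst 0 z (r.liftAt 0)) z))) :=
    box_all.box_allE z
  rwa [Tm.subst_liftAt] at box_imp

-- `□A → A` is not an axiom scheme, so the box coming from the definition of `ω` is not removed;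
-- instead `A → □A` boxes the hypothesis that `z` is inductive.
theorem box_mem_of_mem_omega (hr : Prf Γ (.mem r .omega)) (hz : Prf Γ (.isInductive z)) :
    Prf Γ (.box (.mem r z)) :=
  (hr.box_isInductive_imp_mem_of_mem_omega z).box_impE hz.box_intro

end Prf

/-- The boxed induction formula
(∀z)[(0 ∈ z ∧ (∀x)(x ∈ z → Sx ∈ z)) → (∀y)(y ∈ ω → □(y ∈ z))]
is provable in CC″. -/
theorem boxed_induction :
    Prf [] (.all (.imp
      (.and (.mem .zero (.var 0))
        (.all (.imp (.mem (.var 0) (.var 1))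
          (.mem (.succ (.var 0)) (.var 1)))))
      (.all (.imp (.mem (.var 0) .omega)
        (.box (.mem (.var 0) (.var 1))))))) := by
  refine .allI (.impI (.allI (.impI ?_)))
  refine .box_mem_of_mem_omega (r := .var 0) (z := .var 1) (.hyp ?mem_omega) (.hyp ?isInductive)
  case mem_omega => exact List.mem_cons_self
  case isInductive => exact List.mem_cons_of_mem _ List.mem_cons_self

end CC2
end
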